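/- Let B ⊆ A be an extension of k-algebras, X an A-bimodule, σ a k-linear section of π : A → A/B, and S = σ(A/B), so that A = B ⊕ S as k-vector spaces. Then for every n ≥ 2: (i) the kernel of κ : X⊗A^{⊗n} → X⊗_{B^e}(A/B)^{⊗_B n} equals L_{n,0} ⊕ (⊕_{p+q=n, p≥0, q>0} X⊗[S_pB_q]); (ii) the image of the inclusion ι : X⊗B^{⊗n} → X⊗A^{⊗n} equals X⊗[S_0B_n] = X⊗B^{⊗n}; and (iii) consequently Ker κ / Im ι ≅ L_{n,0} ⊕ (⊕_{p+q=n, p>0, q>0} X⊗[S_pB_q]). -/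

import Mathlib

open scoped TensorProduct
open MulOpposite PiTensorProduct

namespace JZH

variable (k : Type) [Field k]
variable (A : Type) [Ring A] [Algebra k A] (B : Subalgebra k A)
variable (X : Type) [AddCommGroup X] [Module k X]
  [Module A X] [Module Aᵐᵒᵖ X] [SMulCommClass A Aᵐᵒᵖ X]
  [IsScalarTower k A X] [IsScalarTower k Aᵐᵒᵖ X]

/-- The quotient `B`-bimodule `A/B`. -/
abbrev QM : Type := A ⧸ (Subalgebra.toSubmodule B)

/-- The canonical projection `π : A → A/B`. -/
noncomputable def πQ : A →ₗ[k] QM k A B := (Subalgebra.toSubmodule B).mkQ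

/-- The left action of `b ∈ B` on `A/B`, induced by left multiplication. -/
noncomputable def Ql (b : B) : QM k A B →ₗ[k] QM k A B :=
  Submodule.mapQ _ _ (LinearMap.mulLeft k (b : A))
    (fun a ha => by
      simp only [Submodule.mem_comap, LinearMap.mulLeft_apply, Subalgebra.mem_toSubmodule] at *
      exact B.mul_mem b.2 ha)

/-- The right action of `b ∈ B` on `A/B`, induced by right multiplication. -/
noncomputable def Qr (b : B) : QM k A B →ₗ[k] QM k A B :=
  Submodule.mapQ _ _ (LinearMap.mulRight k (b : A))
    (fun a ha => by
      simp only [Submodule.mem_comap, LinearMap.mulRight_apply, Subalgebra.mem_toSubmodule] at *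
      exact B.mul_mem ha b.2)

/-- Merging of two adjacent entries of a tuple, using a given "product". -/
def mergeFun {M : Type} (mul : M → M → M) {n : ℕ} (a : Fin (n+1) → M) (j : Fin n) :
    Fin n → M := fun l =>
  if (l : ℕ) < (j : ℕ) then a l.castSucc
  else if (l : ℕ) = (j : ℕ) then mul (a l.castSucc) (a l.succ)
  else a l.succ

/-- Degree-`n` term of the Hochschild chain complex of `A` with coefficients in `X`. -/
def CH : ℕ → Type
  | 0 => X
  | n + 1 => X ⊗[k] (⨂[k] (_ : Fin (n+1)), A)

noncomputable instance CHacg : ∀ n, AddCommGroup (CH k A X n)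
  | 0 => inferInstanceAs (AddCommGroup X)
  | n + 1 => inferInstanceAs (AddCommGroup (X ⊗[k] (⨂[k] (_ : Fin (n+1)), A)))

noncomputable instance CHmod : ∀ n, Module k (CH k A X n)
  | 0 => inferInstanceAs (Module k X)
  | n + 1 => inferInstanceAs (Module k (X ⊗[k] (⨂[k] (_ : Fin (n+1)), A)))

/-- The Hochschild boundary formula in lowest degree: `b(x ⊗ a) = x·a − a·x`. -/
def hochZero (x : X) (a : Fin 1 → A) : CH k A X 0 :=
  (op (a 0) • x) - (a 0 • x)

/-- The Hochschild boundary formula on elementary tensors,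
`b(x ⊗ a₁ ⊗ ⋯ ⊗ a_{n+2}) = x·a₁ ⊗ a₂ ⊗ ⋯ + Σ (−1)^i x ⊗ ⋯ ⊗ a_i a_{i+1} ⊗ ⋯ +
(−1)^{n+2} a_{n+2}·x ⊗ a₁ ⊗ ⋯ ⊗ a_{n+1}`. -/
noncomputable def hochSucc (n : ℕ) (x : X) (a : Fin (n+2) → A) : CH k A X (n+1) :=
  (op (a 0) • x) ⊗ₜ[k] (tprod k fun i : Fin (n+1) => a i.succ)
  + ∑ j : Fin (n+1), ((-1 : ℤ) ^ ((j : ℕ) + 1)) •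
      (x ⊗ₜ[k] (tprod k (mergeFun (fun y z => y * z) a j)))
  + ((-1 : ℤ) ^ (n + 2)) •
      ((a (Fin.last (n+1)) • x) ⊗ₜ[k] (tprod k fun i : Fin (n+1) => a i.castSucc))

/-- `d` is the family of Hochschild differentials of `A` with coefficients in `X`. -/
def IsHochschildDiff (d : ∀ n, CH k A X (n+1) →ₗ[k] CH k A X n) : Prop :=
  (∀ (x : X) (a : Fin 1 → A), d 0 (x ⊗ₜ[k] tprod k a) = hochZero k A X x a) ∧
  (∀ (n : ℕ) (x : X) (a : Fin (n+2) → A),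
    d (n+1) (x ⊗ₜ[k] tprod k a) = hochSucc k A X n x a)

/-- Degree-`n` term of the Hochschild chain complex of the subalgebra `B` with
coefficients in `X`. -/
def CHB : ℕ → Type
  | 0 => X
  | n + 1 => X ⊗[k] (⨂[k] (_ : Fin (n+1)), B)

noncomputable instance CHBacg : ∀ n, AddCommGroup (CHB k A B X n)
  | 0 => inferInstanceAs (AddCommGroup X)
  | n + 1 => inferInstanceAs (AddCommGroup (X ⊗[k] (⨂[k] (_ : Fin (n+1)), B)))

noncomputable instance CHBmod : ∀ n, Module k (CHB k A B X n)
  | 0 => inferInstanceAs (Module k X)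
  | n + 1 => inferInstanceAs (Module k (X ⊗[k] (⨂[k] (_ : Fin (n+1)), B)))

/-- Hochschild boundary formula for `B`, lowest degree. -/
def hochBZero (x : X) (b : Fin 1 → B) : CHB k A B X 0 :=
  (op ((b 0 : A)) • x) - ((b 0 : A) • x)

/-- Hochschild boundary formula for `B` on elementary tensors. -/
noncomputable def hochBSucc (n : ℕ) (x : X) (b : Fin (n+2) → B) : CHB k A B X (n+1) :=
  (op ((b 0 : A)) • x) ⊗ₜ[k] (tprod k fun i : Fin (n+1) => b i.succ)
  + ∑ j : Fin (n+1), ((-1 : ℤ) ^ ((j : ℕ) + 1)) •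
      (x ⊗ₜ[k] (tprod k (mergeFun (fun y z => y * z) b j)))
  + ((-1 : ℤ) ^ (n + 2)) •
      (((b (Fin.last (n+1)) : A) • x) ⊗ₜ[k] (tprod k fun i : Fin (n+1) => b i.castSucc))

/-- `d` is the family of Hochschild differentials of `B` with coefficients in `X`. -/
def IsHochschildDiffB (d : ∀ n, CHB k A B X (n+1) →ₗ[k] CHB k A B X n) : Prop :=
  (∀ (x : X) (b : Fin 1 → B), d 0 (x ⊗ₜ[k] tprod k b) = hochBZero k A B X x b) ∧
  (∀ (n : ℕ) (x : X) (b : Fin (n+2) → B),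
    d (n+1) (x ⊗ₜ[k] tprod k b) = hochBSucc k A B X n x b)

/-- The subspace of `X` spanned by the commutators `b·x − x·b`, `b ∈ B`;
the quotient is `X_B`. -/
def commRel : Submodule k X :=
  Submodule.span k {z : X | ∃ (b : B) (x : X), z = (b : A) • x - op (b : A) • x}

/-- The balancing relations defining `X ⊗_{Bᵉ} (A/B)^{⊗_B (n+1)}` inside
`X ⊗[k] (A/B)^{⊗[k] (n+1)}`. -/
def relRel (n : ℕ) : Submodule k (X ⊗[k] (⨂[k] (_ : Fin (n+1)), QM k A B)) :=
  Submodule.span k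
    ({z | ∃ (x : X) (α : Fin (n+1) → QM k A B) (b : B),
        z = (op (b : A) • x) ⊗ₜ[k] tprod k α
            - x ⊗ₜ[k] tprod k (Function.update α 0 (Ql k A B b (α 0)))} ∪
     {z | ∃ (x : X) (α : Fin (n+1) → QM k A B) (b : B) (i : Fin n),
        z = x ⊗ₜ[k] tprod k (Function.update α i.castSucc (Qr k A B b (α i.castSucc)))
            - x ⊗ₜ[k] tprod k (Function.update α i.succ (Ql k A B b (α i.succ)))} ∪
     {z | ∃ (x : X) (α : Fin (n+1) → QM k A B) (b : B),
        z = x ⊗ₜ[k] tprod k (Function.update α (Fin.last n) (Qr k A B b (α (Fin.last n))))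
            - ((b : A) • x) ⊗ₜ[k] tprod k α})

/-- Degree-`n` term of the relative Hochschild chain complex `C_*(A|B,X)`:
`X_B` in degree `0` and `X ⊗_{Bᵉ} (A/B)^{⊗_B n}` in degree `n ≥ 1`. -/
def RC : ℕ → Type
  | 0 => X ⧸ commRel k A B X
  | n + 1 => (X ⊗[k] (⨂[k] (_ : Fin (n+1)), QM k A B)) ⧸ relRel k A B X n

noncomputable instance RCacg : ∀ n, AddCommGroup (RC k A B X n)
  | 0 => inferInstanceAs (AddCommGroup (_ ⧸ _))
  | n + 1 => inferInstanceAs (AddCommGroup (_ ⧸ _))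

noncomputable instance RCmod : ∀ n, Module k (RC k A B X n)
  | 0 => inferInstanceAs (Module k (_ ⧸ _))
  | n + 1 => inferInstanceAs (Module k (_ ⧸ _))

/-- Class of an element of `X ⊗[k] (A/B)^{⊗ (n+1)}` in the relative chain module. -/
noncomputable def mkRC (n : ℕ) :
    (X ⊗[k] (⨂[k] (_ : Fin (n+1)), QM k A B)) →ₗ[k] RC k A B X (n+1) :=
  (relRel k A B X n).mkQ

/-- Class of an element of `X` in `X_B`. -/
noncomputable def mkXB : X →ₗ[k] RC k A B X 0 := (commRel k A B X).mkQ

variable (σ : QM k A B →ₗ[k] A)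

/-- Relative Hochschild boundary formula, lowest degree:
`b(x ⊗ α) = x·σ(α) − σ(α)·x` (with values in `X`, before passing to `X_B`). -/
def relZero (x : X) (α : Fin 1 → QM k A B) : X :=
  (op (σ (α 0)) • x) - (σ (α 0) • x)

/-- Relative Hochschild boundary formula on elementary tensors (values in
`X ⊗[k] (A/B)^{⊗(n+1)}`, before passing to the quotient). -/
noncomputable def relSucc (n : ℕ) (x : X) (α : Fin (n+2) → QM k A B) :
    X ⊗[k] (⨂[k] (_ : Fin (n+1)), QM k A B) :=
  (op (σ (α 0)) • x) ⊗ₜ[k] (tprod k fun i : Fin (n+1) => α i.succ)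
  + ∑ j : Fin (n+1), ((-1 : ℤ) ^ ((j : ℕ) + 1)) •
      (x ⊗ₜ[k] (tprod k (mergeFun (fun y z => πQ k A B (σ y * σ z)) α j)))
  + ((-1 : ℤ) ^ (n + 2)) •
      ((σ (α (Fin.last (n+1))) • x) ⊗ₜ[k] (tprod k fun i : Fin (n+1) => α i.castSucc))

/-- `d` is the family of relative Hochschild differentials, for the section `σ`. -/
def IsRelDiff (d : ∀ n, RC k A B X (n+1) →ₗ[k] RC k A B X n) : Prop :=
  (∀ (x : X) (α : Fin 1 → QM k A B),
    d 0 (mkRC k A B X 0 (x ⊗ₜ[k] tprod k α)) = mkXB k A B X (relZero k A B X σ x α)) ∧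
  (∀ (n : ℕ) (x : X) (α : Fin (n+2) → QM k A B),
    d (n+1) (mkRC k A B X (n+1) (x ⊗ₜ[k] tprod k α)) =
      mkRC k A B X n (relSucc k A B X σ n x α))

/-- The chain map `κ : C_*(A,X) → C_*(A|B,X)` induced by `π`. -/
noncomputable def κmap : ∀ n, CH k A X n →ₗ[k] RC k A B X n
  | 0 => mkXB k A B X
  | n + 1 => (mkRC k A B X n).comp
      (TensorProduct.map LinearMap.id (PiTensorProduct.map fun _ => πQ k A B))

/-- The chain map `ι : C_*(B,X) → C_*(A,X)` induced by the inclusion `B ⊆ A`. -/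
noncomputable def ιmap : ∀ n, CHB k A B X n →ₗ[k] CH k A X n
  | 0 => LinearMap.id
  | n + 1 => TensorProduct.map LinearMap.id (PiTensorProduct.map fun _ => B.val.toLinearMap)

end JZH

namespace JZH

variable (k : Type) [Field k]
variable (A : Type) [Ring A] [Algebra k A] (B : Subalgebra k A)
variable (X : Type) [AddCommGroup X] [Module k X]
  [Module A X] [Module Aᵐᵒᵖ X] [SMulCommClass A Aᵐᵒᵖ X]
  [IsScalarTower k A X] [IsScalarTower k Aᵐᵒᵖ X]

/-- The subspace `V₁ ⊗ ⋯ ⊗ Vₙ` of `A^{⊗n}` associated to a family of subspaces `W i ⊆ A`. -/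
noncomputable def sliceSub (n : ℕ) (W : Fin n → Submodule k A) :
    Submodule k (⨂[k] (_ : Fin n), A) :=
  LinearMap.range (PiTensorProduct.map fun i => (W i).subtype)

/-- The family of subspaces of `A` determined by `ε : Fin n → Bool`: slot `i` is
`S = σ(A/B)` if `ε i = true` and `B` if `ε i = false`. -/
noncomputable def slotSub (σ : QM k A B →ₗ[k] A) {n : ℕ} (ε : Fin n → Bool) :
    Fin n → Submodule k A :=
  fun i => if ε i then LinearMap.range σ else Subalgebra.toSubmodule B

/-- The subspace `X ⊗ U` of `X ⊗ T` associated to a subspace `U ⊆ T`. -/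
noncomputable def xTensorSub {T : Type} [AddCommGroup T] [Module k T]
    (U : Submodule k T) : Submodule k (X ⊗[k] T) :=
  LinearMap.range (LinearMap.lTensor X U.subtype)

/-- `L_{n,0}`: the kernel of the restriction of `κ` to `X ⊗ S^{⊗n}`, i.e.
`(X ⊗ S^{⊗n}) ∩ Ker κ`. -/
noncomputable def Ln0 (σ : QM k A B →ₗ[k] A) (m : ℕ) :
    Submodule k (CH k A X (m+1)) :=
  (xTensorSub k X (sliceSub k A (m+1) (slotSub k A B σ (fun _ => true)))) ⊓
    LinearMap.ker (κmap k A B X (m+1))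

end JZH

/-!
The section `σ` splits `A = S ⊕ B`, so the tensor products of the two projections are complete
orthogonal idempotents of `X ⊗ A^{⊗n}`, and their ranges are the `2ⁿ` subspaces
`X ⊗ V₁ ⊗ ⋯ ⊗ Vₙ` with `V i ∈ {S, B}`. As `π` kills `B`, the map `κ` vanishes on all of these
except `X ⊗ S^{⊗n}`; by the modular law its kernel is the sum of the remaining ones and of its
intersection with `X ⊗ S^{⊗n}`. The image of `ι` is the summand `X ⊗ B^{⊗n}`, and dividing by it
leaves the other summands.
-/

namespace TensorSplitting

open Module Submodule

section DirectSumDecompositions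

variable {R M N I : Type*} [Ring R] [AddCommGroup M] [Module R M] [AddCommGroup N] [Module R N]
  {V : I → Submodule R M} {f : M →ₗ[R] N} {s t : I}

theorem iSup_range_eq_top [Fintype I] {e : I → End R M} (he : CompleteOrthogonalIdempotents e) :
    ⨆ i, LinearMap.range (e i) = ⊤ := by
  refine eq_top_iff'.mpr fun x => ?_
  have hx : ∑ i, e i x = x := by
    simpa only [LinearMap.sum_apply, End.one_apply] using LinearMap.congr_fun he.complete x
  rw [← hx]
  exact sum_mem fun i _ => mem_iSup_of_mem i (LinearMap.mem_range_self _ x)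

theorem iSupIndep_range {e : I → End R M} (he : OrthogonalIdempotents e) :
    iSupIndep fun i => LinearMap.range (e i) := by
  refine fun i => disjoint_def.mpr fun x hx hx' => ?_
  have hker : ⨆ (j) (_ : j ≠ i), LinearMap.range (e j) ≤ LinearMap.ker (e i) :=
    iSup₂_le fun j hj => LinearMap.range_le_ker_iff.mpr (he.ortho hj.symm)
  rw [← (LinearMap.IsIdempotentElem.mem_range_iff (he.idem i)).mp hx]
  exact hker hx'

theorem ker_eq_inf_ker_sup_iSup_ne (hV : ⨆ i, V i = ⊤) (hf : ∀ i ≠ t, V i ≤ LinearMap.ker f) :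
    LinearMap.ker f = V t ⊓ LinearMap.ker f ⊔ ⨆ (i) (_ : i ≠ t), V i := by
  rw [sup_comm, ← sup_inf_assoc_of_le _ (iSup₂_le hf), sup_comm, ← iSup_split_single, hV,
    top_inf_eq]

theorem ker_inf_iSup_ne_eq (hts : t ≠ s) (hf : ∀ i ≠ t, V i ≤ LinearMap.ker f) :
    LinearMap.ker f ⊓ ⨆ (i) (_ : i ≠ s), V i =
      V t ⊓ LinearMap.ker f ⊔ ⨆ i : {i // i ≠ t ∧ i ≠ s}, V i.1 := by
  have hsplit : ⨆ (i) (_ : i ≠ s), V i = (⨆ i : {i // i ≠ t ∧ i ≠ s}, V i.1) ⊔ V t := by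
    rw [iSup_split_single _ t, iSup_pos hts, sup_comm, iSup_subtype]
    simp only [iSup_and]
  have hle : ⨆ i : {i // i ≠ t ∧ i ≠ s}, V i.1 ≤ LinearMap.ker f :=
    iSup_le fun i => hf i.1 i.2.1
  rw [hsplit, inf_comm, sup_inf_assoc_of_le _ hle, sup_comm]

/-- The sum of `P` and of the members of an independent family `V`, when it is direct, as an
external direct sum. -/
noncomputable def prodDirectSumEquivSup {P : Submodule R M} (hV : iSupIndep V)
    (hP : Disjoint P (⨆ i, V i)) : (P × DirectSum I fun i => V i) ≃ₗ[R] ↥(P ⊔ ⨆ i, V i) := by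
  classical
  have hinj : Function.Injective (P.subtype.coprod (DirectSum.coeLinearMap V)) := by
    rw [← LinearMap.ker_eq_bot, LinearMap.ker_coprod_of_disjoint_range, P.ker_subtype,
      (LinearMap.ker_eq_bot (f := DirectSum.coeLinearMap V)).mpr hV.dfinsupp_lsum_injective,
      prod_bot]
    rwa [P.range_subtype, DirectSum.range_coeLinearMap]
  exact (LinearEquiv.ofInjective _ hinj).trans (LinearEquiv.ofEq _ _ (by
    rw [LinearMap.range_coprod, P.range_subtype, DirectSum.range_coeLinearMap]))

/-- If `M = ⨁ V i` and `f` vanishes on every `V i` with `i ≠ t`, the quotient of `ker f` by one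
of these summands is the direct sum of the others and of the kernel of `f` on `V t`. -/
noncomputable def kerQuotientEquiv (hV : iSupIndep V) (hV' : ⨆ i, V i = ⊤) (hts : t ≠ s)
    (hf : ∀ i ≠ t, V i ≤ LinearMap.ker f) :
    (LinearMap.ker f ⧸ (V s).comap (LinearMap.ker f).subtype) ≃ₗ[R]
      (V t ⊓ LinearMap.ker f : Submodule R M) ×
        DirectSum {i // i ≠ t ∧ i ≠ s} fun i => V i.1 :=
  have hcompl : IsCompl (V s) (⨆ (i) (_ : i ≠ s), V i) :=
    ⟨hV s, codisjoint_iff.mpr ((iSup_split_single V s).symm.trans hV')⟩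
  have hdisj : Disjoint (V t ⊓ LinearMap.ker f) (⨆ i : {i // i ≠ t ∧ i ≠ s}, V i.1) :=
    (hV t).mono inf_le_left (iSup_le fun i => le_iSup₂_of_le i.1 i.2.1 le_rfl)
  quotientEquivOfIsCompl _ _ (isCompl_comap_subtype_of_isCompl_of_le hcompl (hf s hts.symm)) ≪≫ₗ
    equivSubtypeMap _ _ ≪≫ₗ
    LinearEquiv.ofEq _ _ ((map_comap_subtype _ _).trans (ker_inf_iSup_ne_eq hts hf)) ≪≫ₗ
    (prodDirectSumEquivSup (hV.comp Subtype.val_injective) hdisj).symm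

end DirectSumDecompositions

section TensorPowers

variable {R ι : Type*} [CommRing R] {M N : ι → Type*} [∀ i, AddCommGroup (M i)]
  [∀ i, Module R (M i)] [∀ i, AddCommGroup (N i)] [∀ i, Module R (N i)]

theorem map_eq_zero_of_eq_zero {f : ∀ i, M i →ₗ[R] N i} {i : ι} (hi : f i = 0) :
    PiTensorProduct.map f = 0 := by
  classical
  exact (PiTensorProduct.mapMultilinear R M N).map_coord_zero i hi

theorem range_map_subtype_range (f : ∀ i, M i →ₗ[R] N i) :
    LinearMap.range (PiTensorProduct.map fun i => (LinearMap.range (f i)).subtype) =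
      LinearMap.range (PiTensorProduct.map f) := by
  refine le_antisymm ?_ ?_
  · rw [PiTensorProduct.map_range_eq_span_tprod, span_le]
    rintro _ ⟨m, rfl⟩
    choose n hn using fun i => (m i).2
    have hm : (fun i => f i (n i)) = fun i => (LinearMap.range (f i)).subtype (m i) := funext hn
    rw [← hm, ← PiTensorProduct.map_tprod]
    exact LinearMap.mem_range_self _ _
  · have hcomp : PiTensorProduct.map f =
        (PiTensorProduct.map fun i => (LinearMap.range (f i)).subtype) ∘ₗ
          PiTensorProduct.map fun i => (f i).rangeRestrict :=
      PiTensorProduct.map_comp (fun i => (LinearMap.range (f i)).subtype)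
        fun i => (f i).rangeRestrict
    rw [hcomp]
    exact LinearMap.range_comp_le_range _ _

theorem range_lTensor_map (X : Type*) [AddCommGroup X] [Module R X] {f : ∀ i, M i →ₗ[R] N i}
    {W : ∀ i, Submodule R (N i)} (hf : ∀ i, LinearMap.range (f i) = W i) :
    LinearMap.range (LinearMap.lTensor X (PiTensorProduct.map f)) =
      LinearMap.range (LinearMap.lTensor X
        (LinearMap.range (PiTensorProduct.map fun i => (W i).subtype)).subtype) := by
  obtain rfl : (fun i => LinearMap.range (f i)) = W := funext hf
  rw [range_map_subtype_range]
  exact LinearMap.lTensor_range X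

theorem completeOrthogonalIdempotents_map [Fintype ι] [DecidableEq ι]
    {β : ι → Type*} [∀ i, Fintype (β i)]
    {e : ∀ i, β i → End R (M i)} (he : ∀ i, CompleteOrthogonalIdempotents (e i)) :
    CompleteOrthogonalIdempotents fun ε : ∀ i, β i =>
      (PiTensorProduct.map fun i => e i (ε i) : End R (⨂[R] i, M i)) := by
  refine ⟨⟨fun ε => ?_, fun ε δ hne => ?_⟩, ?_⟩
  · rw [IsIdempotentElem, ← PiTensorProduct.map_mul]
    simp only [((he _).idem _).eq]
  · obtain ⟨i, hi⟩ := Function.ne_iff.mp hne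
    simp only [← PiTensorProduct.map_mul]
    exact map_eq_zero_of_eq_zero ((he i).ortho hi)
  · have hsum := (PiTensorProduct.mapMultilinear R M M).map_sum e
    simp only [(he _).complete, PiTensorProduct.mapMultilinear_apply,
      PiTensorProduct.map_one] at hsum
    exact hsum.symm

end TensorPowers

section Splitting

variable {R A : Type*} [CommRing R] [AddCommGroup A] [Module R A] {B : Submodule R A}
  (X : Type*) [AddCommGroup X] [Module R X] {ι : Type*} (σ : A ⧸ B →ₗ[R] A)

/-- The two projections of `A = B ⊕ σ(A/B)`: onto `σ(A/B)` for `true` and onto `B` for `false`. -/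
noncomputable def slotProj : Bool → End R A
  | true => σ ∘ₗ B.mkQ
  | false => 1 - σ ∘ₗ B.mkQ

/-- The subspace `X ⊗ V₁ ⊗ ⋯ ⊗ Vₙ` of `X ⊗ A^{⊗n}`, where `V i` is `S = σ(A/B)` if `ε i = true`
and `B` if `ε i = false`. The summand `X ⊗ [S_pB_q]` is the sum of those with `p` slots `true`. -/
noncomputable def slotTensor (ε : ι → Bool) : Submodule R (X ⊗[R] (⨂[R] _ : ι, A)) :=
  LinearMap.range (LinearMap.lTensor X (LinearMap.range (PiTensorProduct.map fun i =>
    (if ε i then LinearMap.range σ else B).subtype)).subtype)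

/-- The projection of `X ⊗ A^{⊗n}` onto `slotTensor X σ ε`. -/
noncomputable def slotTensorProj (ε : ι → Bool) : End R (X ⊗[R] (⨂[R] _ : ι, A)) :=
  LinearMap.lTensor X (PiTensorProduct.map fun i => slotProj σ (ε i))

theorem range_lTensor_map_subtype :
    LinearMap.range (LinearMap.lTensor X (PiTensorProduct.map fun _ : ι => B.subtype)) =
      slotTensor X σ fun _ => false :=
  LinearMap.lTensor_range X

variable {σ}

theorem mkQ_comp_slotProj_false (hσ : B.mkQ ∘ₗ σ = LinearMap.id) :
    B.mkQ ∘ₗ slotProj σ false = 0 := by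
  rw [slotProj, LinearMap.comp_sub, ← LinearMap.comp_assoc, hσ]
  exact sub_self _

theorem isIdempotentElem_slotProj_true (hσ : B.mkQ ∘ₗ σ = LinearMap.id) :
    IsIdempotentElem (slotProj σ true) := by
  change (σ ∘ₗ B.mkQ) ∘ₗ σ ∘ₗ B.mkQ = σ ∘ₗ B.mkQ
  rw [LinearMap.comp_assoc, ← LinearMap.comp_assoc B.mkQ, hσ, LinearMap.id_comp]

theorem completeOrthogonalIdempotents_slotProj (hσ : B.mkQ ∘ₗ σ = LinearMap.id) :
    CompleteOrthogonalIdempotents (slotProj σ) := by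
  have h := isIdempotentElem_slotProj_true hσ
  refine ⟨⟨Bool.forall_bool.mpr ⟨h.one_sub, h⟩, ?_⟩, ?_⟩
  · rintro (_ | _) (_ | _) hne
    · exact absurd rfl hne
    · exact h.one_sub_mul_self
    · exact h.mul_one_sub_self
    · exact absurd rfl hne
  · rw [Fintype.sum_bool]
    exact add_sub_cancel _ _

theorem range_slotProj (hσ : B.mkQ ∘ₗ σ = LinearMap.id) (b : Bool) :
    LinearMap.range (slotProj σ b) = if b then LinearMap.range σ else B := by
  cases b with
  | true => exact LinearMap.range_comp_of_range_eq_top σ B.range_mkQ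
  | false =>
    have hker : LinearMap.ker σ = ⊥ :=
      LinearMap.ker_eq_bot_of_inverse hσ
    exact (LinearMap.IsIdempotentElem.ker_eq_range_one_sub
      (isIdempotentElem_slotProj_true hσ)).symm.trans
      ((LinearMap.ker_comp_of_ker_eq_bot _ hker).trans B.ker_mkQ)

theorem range_slotTensorProj (hσ : B.mkQ ∘ₗ σ = LinearMap.id) (ε : ι → Bool) :
    LinearMap.range (slotTensorProj X σ ε) = slotTensor X σ ε :=
  range_lTensor_map X fun i => range_slotProj hσ (ε i)

theorem completeOrthogonalIdempotents_slotTensorProj [Fintype ι] [DecidableEq ι]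
    (hσ : B.mkQ ∘ₗ σ = LinearMap.id) :
    CompleteOrthogonalIdempotents (slotTensorProj X σ : (ι → Bool) → _) :=
  (completeOrthogonalIdempotents_map fun _ : ι => completeOrthogonalIdempotents_slotProj hσ).map
    (Module.End.lTensorAlgHom R (⨂[R] _ : ι, A) X).toRingHom

theorem slotTensor_le_ker {Y : Type*} [AddCommGroup Y] [Module R Y]
    (hσ : B.mkQ ∘ₗ σ = LinearMap.id) (g : (X ⊗[R] (⨂[R] _ : ι, A ⧸ B)) →ₗ[R] Y)
    {ε : ι → Bool} (hε : ε ≠ fun _ => true) :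
    slotTensor X σ ε ≤
      LinearMap.ker (g ∘ₗ LinearMap.lTensor X (PiTensorProduct.map fun _ => B.mkQ)) := by
  obtain ⟨i, hi⟩ : ∃ i, ε i = false := by simpa [Function.ne_iff] using hε
  rw [← range_slotTensorProj X hσ, LinearMap.range_le_ker_iff, slotTensorProj,
    LinearMap.comp_assoc, ← LinearMap.lTensor_comp, ← PiTensorProduct.map_comp,
    map_eq_zero_of_eq_zero (i := i) (by rw [hi, mkQ_comp_slotProj_false hσ]),
    LinearMap.lTensor_zero, LinearMap.comp_zero]

end Splitting

end TensorSplitting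

open TensorSplitting in
theorem kernel_of_kappa_decomposition_general {R A X Y ι : Type*} [CommRing R]
    [AddCommGroup A] [Module R A] [AddCommGroup X] [Module R X] [AddCommGroup Y] [Module R Y]
    [Finite ι] [Nonempty ι] {B : Submodule R A} (σ : A ⧸ B →ₗ[R] A)
    (hσ : B.mkQ ∘ₗ σ = LinearMap.id) (g : (X ⊗[R] (⨂[R] _ : ι, A ⧸ B)) →ₗ[R] Y) :
    let κ := g ∘ₗ LinearMap.lTensor X (PiTensorProduct.map fun _ : ι => B.mkQ)
    LinearMap.ker κ = slotTensor X σ (fun _ => true) ⊓ LinearMap.ker κ ⊔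
        ⨆ (ε : ι → Bool) (_ : ∃ i, ε i = false), slotTensor X σ ε ∧
    LinearMap.range (LinearMap.lTensor X (PiTensorProduct.map fun _ : ι => B.subtype)) =
      slotTensor X σ (fun _ => false) ∧
    Nonempty ((LinearMap.ker κ ⧸ (LinearMap.range (LinearMap.lTensor X
          (PiTensorProduct.map fun _ : ι => B.subtype))).comap (LinearMap.ker κ).subtype) ≃ₗ[R]
        (slotTensor X σ (fun _ => true) ⊓ LinearMap.ker κ : Submodule R _) ×
          DirectSum {ε : ι → Bool // (∃ i, ε i = true) ∧ ∃ i, ε i = false}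
            fun ε => slotTensor X σ ε.1) := by
  classical
  intro κ
  have := Fintype.ofFinite ι
  have he := completeOrthogonalIdempotents_slotTensorProj (ι := ι) X hσ
  have hV : (fun ε : ι → Bool => LinearMap.range (slotTensorProj X σ ε)) = slotTensor X σ :=
    funext (range_slotTensorProj X hσ)
  have hindep := hV ▸ iSupIndep_range he.toOrthogonalIdempotents
  have htop : ⨆ ε : ι → Bool, slotTensor X σ ε = ⊤ := hV ▸ iSup_range_eq_top he
  have hker : ∀ ε : ι → Bool, ε ≠ (fun _ => true) → slotTensor X σ ε ≤ LinearMap.ker κ :=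
    fun ε hε => slotTensor_le_ker X hσ g hε
  have hne (ε : ι → Bool) (b : Bool) : (∃ i, ε i = b) ↔ ε ≠ fun _ => !b := by
    simp [Function.ne_iff]
  have hts : (fun _ : ι => true) ≠ fun _ => false := by simp [Function.ne_iff]
  simp only [hne, Bool.not_false]
  rw [range_lTensor_map_subtype X σ]
  refine ⟨ker_eq_inf_ker_sup_iSup_ne htop hker, rfl, ⟨?_⟩⟩
  have hindices : (fun ε : ι → Bool => (∃ i, ε i = true) ∧ ∃ i, ε i = false) =
      fun ε => ε ≠ (fun _ => true) ∧ ε ≠ fun _ => false := by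
    simp only [hne, Bool.not_true, Bool.not_false, and_comm]
  rw [hindices]
  exact kerQuotientEquiv hindep htop hts hker

/-- Let `B ⊆ A` be an extension of `k`-algebras, `X` an `A`-bimodule,
`σ` a `k`-linear section of `π : A → A/B` and `S = σ(A/B)`, so `A = B ⊕ S`.  For every
`n = m+2 ≥ 2`: (i) `Ker (κ : X⊗A^{⊗n} → X⊗_{Bᵉ}(A/B)^{⊗_B n})` is the sum of `L_{n,0}` and
the subspaces `X ⊗ [S_pB_q]` with `q > 0`; (ii) the image of `ι : X⊗B^{⊗n} → X⊗A^{⊗n}` is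
`X ⊗ [S_0B_n]`; (iii) consequently `Ker κ / Im ι ≅ L_{n,0} ⊕ (⊕_{p,q>0} X ⊗ [S_pB_q])`. -/
theorem kernel_of_kappa_decomposition
    (k : Type) [Field k] (A : Type) [Ring A] [Algebra k A] (B : Subalgebra k A)
    (X : Type) [AddCommGroup X] [Module k X]
    [Module A X] [Module Aᵐᵒᵖ X] [SMulCommClass A Aᵐᵒᵖ X]
    [IsScalarTower k A X] [IsScalarTower k Aᵐᵒᵖ X]
    (σ : JZH.QM k A B →ₗ[k] A) (hσ : (JZH.πQ k A B).comp σ = LinearMap.id)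
    (m : ℕ) :
    -- (i) the kernel of `κ` in degree `n = m+2`:
    (LinearMap.ker (JZH.κmap k A B X (m+2)) =
      JZH.Ln0 k A B X σ (m+1) ⊔
        ⨆ (ε : Fin (m+2) → Bool) (_ : ∃ i, ε i = false),
          JZH.xTensorSub k X (JZH.sliceSub k A (m+2) (JZH.slotSub k A B σ ε))) ∧
    -- (ii) the image of `ι` in degree `n = m+2`:
    (LinearMap.range (JZH.ιmap k A B X (m+2)) =
      JZH.xTensorSub k X
        (JZH.sliceSub k A (m+2) (JZH.slotSub k A B σ (fun _ => false)))) ∧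
    -- (iii) the quotient `Ker κ / Im ι` decomposes as a direct sum:
    Nonempty
      ((LinearMap.ker (JZH.κmap k A B X (m+2)) ⧸
          (LinearMap.range (JZH.ιmap k A B X (m+2))).comap
            (LinearMap.ker (JZH.κmap k A B X (m+2))).subtype) ≃ₗ[k]
        (JZH.Ln0 k A B X σ (m+1)) ×
          (DirectSum {ε : Fin (m+2) → Bool // (∃ i, ε i = true) ∧ (∃ i, ε i = false)}
            (fun ε => JZH.xTensorSub k X
              (JZH.sliceSub k A (m+2) (JZH.slotSub k A B σ ε.1))))) := by
  -- `exact` would check this unification, which unfolds the chain complexes, a second time.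
  apply kernel_of_kappa_decomposition_general (ι := Fin (m + 2)) σ hσ (JZH.mkRC k A B X (m + 1))
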